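/- Let N ≥ 2, let R be an N×N real symmetric positive-definite matrix, let D be the (N−1)×(N−1) difference covariance matrix with entries D_{mn} = R_{NN} + R_{mn} − R_{mN} − R_{nN}, let 1_N ∈ ℝ^N be the all-ones vector, and let g ∈ ℝ^N with difference vector Δg ∈ ℝ^{N−1}. Then gᵀ R⁻¹ g − (1_Nᵀ R⁻¹ g)² / (1_Nᵀ R⁻¹ 1_N) = (Δg)ᵀ D⁻¹ (Δg). Equivalently, writing w' = g − ((1_Nᵀ R⁻¹ g)/(1_Nᵀ R⁻¹ 1_N))·1_N, one has (w')ᵀ R⁻¹ (w') = (Δg)ᵀ D⁻¹ (Δg). -/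

import Mathlib

open Matrix

/-- The difference covariance matrix: for an `N×N` matrix `R` with `N = n+2`, the
`(N−1)×(N−1)` matrix with entries `D_{mk} = R_{NN} + R_{mk} − R_{mN} − R_{kN}`. -/
def diffMatrix {n : ℕ} (R : Matrix (Fin (n + 2)) (Fin (n + 2)) ℝ) :
    Matrix (Fin (n + 1)) (Fin (n + 1)) ℝ :=
  fun m k =>
    R (Fin.last (n + 1)) (Fin.last (n + 1)) + R m.castSucc k.castSucc
      - R m.castSucc (Fin.last (n + 1)) - R k.castSucc (Fin.last (n + 1))

/-- The difference vector `Δg ∈ ℝ^{N−1}`, `(Δg)_m = g_m − g_N`. -/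
def diffVec {n : ℕ} (g : Fin (n + 2) → ℝ) : Fin (n + 1) → ℝ :=
  fun m => g m.castSucc - g (Fin.last (n + 1))

/-- The differencing operator as a matrix. -/
def diffOp (n : ℕ) : Matrix (Fin (n + 1)) (Fin (n + 2)) ℝ :=
  fun m j => (if j = m.castSucc then 1 else 0) - (if j = Fin.last (n + 1) then 1 else 0)

lemma diffOp_mulVec {n : ℕ} (g : Fin (n + 2) → ℝ) : (diffOp n) *ᵥ g = diffVec g := by
  ext m
  simp [diffOp, diffVec, Matrix.mulVec, dotProduct, sub_mul, Finset.sum_sub_distrib]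

lemma diffOp_transpose_mulVec_castSucc {n : ℕ} (z : Fin (n + 1) → ℝ) (m : Fin (n + 1)) :
    ((diffOp n)ᵀ *ᵥ z) m.castSucc = z m := by
  simp [diffOp, Matrix.mulVec, dotProduct, (Fin.castSucc_lt_last m).ne]

lemma diffOp_transpose_mulVec_last {n : ℕ} (z : Fin (n + 1) → ℝ) :
    ((diffOp n)ᵀ *ᵥ z) (Fin.last (n + 1)) = - ∑ i, z i := by
  simp [diffOp, Matrix.mulVec, dotProduct, fun m : Fin (n + 1) => (Fin.castSucc_lt_last m).ne']

lemma diffMatrix_eq {n : ℕ} (R : Matrix (Fin (n + 2)) (Fin (n + 2)) ℝ) (hR : R.IsSymm) :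
    diffMatrix R = diffOp n * R * (diffOp n)ᵀ := by
  ext m k
  have h := hR.apply (Fin.last (n + 1)) k.castSucc
  simp only [diffMatrix, Matrix.mul_apply, diffOp, Matrix.transpose_apply, sub_mul, mul_sub,
    Finset.sum_sub_distrib, ite_mul, mul_ite, one_mul, zero_mul, mul_one, mul_zero,
    Finset.sum_ite_eq', Finset.mem_univ, if_true]
  linarith

lemma diffMatrix_posDef {n : ℕ} (R : Matrix (Fin (n + 2)) (Fin (n + 2)) ℝ) (hR : R.IsSymm)
    (hp : R.PosDef) : (diffMatrix R).PosDef := by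
  rw [diffMatrix_eq R hR, ← Matrix.conjTranspose_eq_transpose_of_trivial]
  apply hp.mul_mul_conjTranspose_same
  intro a b hab
  ext m
  simp only [← Matrix.mulVec_transpose] at hab
  rw [← diffOp_transpose_mulVec_castSucc a m, ← diffOp_transpose_mulVec_castSucc b m, hab]

lemma diff_key {n : ℕ} (R : Matrix (Fin (n + 2)) (Fin (n + 2)) ℝ) (hR : R.IsSymm)
    (hp : R.PosDef) (w : Fin (n + 2) → ℝ) (hw : (fun _ => (1 : ℝ)) ⬝ᵥ R⁻¹ *ᵥ w = 0) :
    w ⬝ᵥ R⁻¹ *ᵥ w = diffVec w ⬝ᵥ (diffMatrix R)⁻¹ *ᵥ diffVec w := by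
  have hRu : IsUnit R.det := (Matrix.isUnit_iff_isUnit_det _).1 hp.isUnit
  have hDu : IsUnit (diffMatrix R).det :=
    (Matrix.isUnit_iff_isUnit_det _).1 (diffMatrix_posDef R hR hp).isUnit
  obtain ⟨y, hy⟩ : ∃ y, y = R⁻¹ *ᵥ w := ⟨_, rfl⟩
  rw [← hy] at hw ⊢
  have hRy : R *ᵥ y = w := by
    rw [hy, Matrix.mulVec_mulVec, Matrix.mul_nonsing_inv _ hRu, Matrix.one_mulVec]
  have hAz : (diffOp n)ᵀ *ᵥ (fun m => y m.castSucc) = y := by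
    ext j
    refine Fin.lastCases ?_ (fun m => ?_) j
    · rw [diffOp_transpose_mulVec_last]
      simp only [dotProduct, one_mul, Fin.sum_univ_castSucc (n := n + 1)] at hw
      linarith
    · rw [diffOp_transpose_mulVec_castSucc]
  have hDz : diffMatrix R *ᵥ (fun m => y m.castSucc) = diffVec w := by
    rw [diffMatrix_eq R hR, ← Matrix.mulVec_mulVec, hAz, ← Matrix.mulVec_mulVec, hRy,
      diffOp_mulVec]
  have hz : (diffMatrix R)⁻¹ *ᵥ diffVec w = fun m => y m.castSucc := by
    rw [← hDz, Matrix.mulVec_mulVec, Matrix.nonsing_inv_mul _ hDu, Matrix.one_mulVec]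
  rw [hz, ← diffOp_mulVec]
  conv_lhs => rw [← hAz]
  rw [Matrix.mulVec_transpose, dotProduct_comm, ← Matrix.dotProduct_mulVec, dotProduct_comm]

/-- `gᵀ R⁻¹ g − (1ᵀ R⁻¹ g)²/(1ᵀ R⁻¹ 1) = (Δg)ᵀ D⁻¹ (Δg)`; equivalently,
with `w' = g − ((1ᵀ R⁻¹ g)/(1ᵀ R⁻¹ 1))·1`, `(w')ᵀ R⁻¹ (w') = (Δg)ᵀ D⁻¹ (Δg)`. -/
theorem rss_drss_quadratic_form_identity
    (n : ℕ) (R : Matrix (Fin (n + 2)) (Fin (n + 2)) ℝ)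
    (hRsymm : R.IsSymm) (hRpd : R.PosDef) (g : Fin (n + 2) → ℝ) :
    let D := diffMatrix R
    let ones : Fin (n + 2) → ℝ := fun _ => (1 : ℝ)
    let w' : Fin (n + 2) → ℝ :=
      g - ((ones ⬝ᵥ (R⁻¹).mulVec g) / (ones ⬝ᵥ (R⁻¹).mulVec ones)) • ones
    (g ⬝ᵥ (R⁻¹).mulVec g
        - (ones ⬝ᵥ (R⁻¹).mulVec g) ^ 2 / (ones ⬝ᵥ (R⁻¹).mulVec ones)
      = diffVec g ⬝ᵥ (D⁻¹).mulVec (diffVec g)) ∧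
      w' ⬝ᵥ (R⁻¹).mulVec w' = diffVec g ⬝ᵥ (D⁻¹).mulVec (diffVec g) := by
  intro D ones w'
  have hpos : 0 < ones ⬝ᵥ R⁻¹ *ᵥ ones := by
    have h := hRpd.inv.dotProduct_mulVec_pos (x := ones)
      (fun h => one_ne_zero (α := ℝ) (congrFun h 0))
    simpa using h
  have hsym : g ⬝ᵥ R⁻¹ *ᵥ ones = ones ⬝ᵥ R⁻¹ *ᵥ g := by
    rw [dotProduct_comm, ← Matrix.vecMul_transpose, Matrix.transpose_nonsing_inv, hRsymm.eq,
      ← Matrix.dotProduct_mulVec]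
  have hw0 : ones ⬝ᵥ R⁻¹ *ᵥ w' = 0 := by
    simp only [w', Matrix.mulVec_sub, Matrix.mulVec_smul, dotProduct_sub, dotProduct_smul,
      smul_eq_mul]
    field_simp
    ring
  have hd : diffVec w' = diffVec g := by
    ext m
    simp [diffVec, w', ones]
  have key := diff_key R hRsymm hRpd w' hw0
  rw [hd] at key
  refine ⟨?_, key⟩
  rw [← key]
  have : w' ⬝ᵥ R⁻¹ *ᵥ w' = g ⬝ᵥ R⁻¹ *ᵥ w' := by
    conv_lhs => enter [1]; simp only [w']
    rw [sub_dotProduct, smul_dotProduct, hw0, smul_zero, sub_zero]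
  rw [this]
  simp only [w', Matrix.mulVec_sub, Matrix.mulVec_smul, dotProduct_sub, dotProduct_smul,
      smul_eq_mul, hsym]
  ring
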